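/- Let α > -1/2 and let T_t(x,y) be the Bessel heat kernel on (0,∞): T_t(x,y) = c_α t^{-1} exp(-(x²+y²)/(4t)) (xy)^{-(α-1)/2} I_{(α-1)/2}(xy/(2t)), where I_μ is the modified Bessel function. Then there exist constants c, C > 0 such that C^{-1} ≤ T_t(x,y) / m_t(x,y) ≤ C for all x, y, t > 0, where m_t(x,y) = t^{-(α+1)/2} exp(-(x²+y²)/(4t)) if xy < t, and m_t(x,y) = t^{-1/2}(xy)^{-α/2} exp(-|x-y|²/(4t)) if xy ≥ t. -/

import Mathlib

open MeasureTheory Set Real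

/-- The modified Bessel function of the first kind `I_μ`, via its power series. -/
noncomputable def besselI (μ r : ℝ) : ℝ :=
  ∑' n : ℕ, (r / 2) ^ (2 * (n : ℝ) + μ) / ((n.factorial : ℝ) * Real.Gamma ((n : ℝ) + μ + 1))

/-- The Bessel heat kernel on `(0,∞)` with parameter `α` and normalizing constant `cα`. -/
noncomputable def besselHeatKernel (α cα t x y : ℝ) : ℝ :=
  cα * t⁻¹ * Real.exp (-(x ^ 2 + y ^ 2) / (4 * t)) * (x * y) ^ (-(α - 1) / 2) *
    besselI ((α - 1) / 2) (x * y / (2 * t))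

/-- The comparison function `m_t(x,y)` in the two-sided heat kernel estimate. -/
noncomputable def heatComparison (α t x y : ℝ) : ℝ :=
  if x * y < t then t ^ (-(α + 1) / 2) * Real.exp (-(x ^ 2 + y ^ 2) / (4 * t))
  else t ^ (-(1 : ℝ) / 2) * (x * y) ^ (-α / 2) * Real.exp (-|x - y| ^ 2 / (4 * t))

open Filter Topology

lemma aux_prod (s : ℝ) (hs : 0 < s) (n : ℕ) :
    (∏ j ∈ Finset.range n, (s + j)) * Real.Gamma s = Real.Gamma (s + n) := by
  induction n with
  | zero => simp
  | succ k ih =>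
    rw [Finset.prod_range_succ, mul_right_comm, ih]
    push_cast
    rw [← add_assoc, Real.Gamma_add_one (by positivity)]
    ring

lemma aux_seq_bd (P : ℕ → ℝ) (hP : ∀ n, 0 < P n) (h : Tendsto P atTop (𝓝 1)) :
    ∃ C > 0, ∀ n, P n ≤ C ∧ 1 ≤ C * P n := by
  obtain ⟨A, hA⟩ := h.bddAbove_range
  obtain ⟨B, hB⟩ := (h.inv₀ one_ne_zero).bddAbove_range
  have hA' : ∀ n, P n ≤ A := fun n => hA ⟨n, rfl⟩
  have hB' : ∀ n, (P n)⁻¹ ≤ B := fun n => hB ⟨n, rfl⟩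
  refine ⟨max A B, lt_of_lt_of_le (hP 0) ((hA' 0).trans (le_max_left _ _)), fun n => ⟨(hA' n).trans (le_max_left _ _), ?_⟩⟩
  have := (hB' n).trans (le_max_right A B)
  calc (1:ℝ) = (P n)⁻¹ * P n := (inv_mul_cancel₀ (hP n).ne').symm
    _ ≤ _ := mul_le_mul_of_nonneg_right this (hP n).le

lemma aux_gamma_bd (c : ℝ) (hc : -1 < c) : ∃ C > 0, ∀ n : ℕ,
    Real.Gamma (n + c + 1) ≤ C * (((n:ℝ) + 1) ^ c * n.factorial) ∧
    ((n:ℝ) + 1) ^ c * n.factorial ≤ C * Real.Gamma (n + c + 1) := by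
  have hG : ∀ n : ℕ, 0 < Real.Gamma (n + c + 1) := fun n =>
    Real.Gamma_pos_of_pos (by have : (0:ℝ) ≤ n := n.cast_nonneg
                              linarith)
  have hD : ∀ n : ℕ, 0 < ((n:ℝ) + 1) ^ c * n.factorial := fun n => by positivity
  have hs : 0 < c + 1 := by linarith
  have hlim : Tendsto (fun n : ℕ => Real.Gamma (n + c + 1) / (((n:ℝ) + 1) ^ c * n.factorial))
      atTop (𝓝 1) := by
    have h1 := Real.GammaSeq_tendsto_Gamma (c + 1)
    have hGs := Real.Gamma_pos_of_pos hs
    have h2 : Tendsto (fun n : ℕ => Real.Gamma (c + 1) / Real.GammaSeq (c + 1) n) atTop (𝓝 1) := by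
      have := (tendsto_const_nhds (x := Real.Gamma (c + 1))).div h1 hGs.ne'
      rwa [div_self hGs.ne'] at this
    have h3 : Tendsto (fun n : ℕ => ((n:ℝ) / ((n:ℝ) + 1)) ) atTop (𝓝 1) :=
      tendsto_natCast_div_add_atTop (1:ℝ)
    have h4 : Tendsto (fun n : ℕ => ((n:ℝ) / ((n:ℝ) + 1)) ^ (c + 1)) atTop (𝓝 1) := by
      have := h3.rpow_const (p := c + 1) (Or.inl one_ne_zero)
      rwa [Real.one_rpow] at this
    have h5 : Tendsto (fun n : ℕ => ((n:ℝ) / ((n:ℝ) + (c+1))) ) atTop (𝓝 1) :=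
      tendsto_natCast_div_add_atTop (c+1)
    have h6 := ((h2.mul h4).mul h5).mul (h3.inv₀ one_ne_zero)
    simp only [mul_one, inv_one] at h6
    refine h6.congr' ?_
    filter_upwards [eventually_gt_atTop 0] with n hn
    have hn' : (0:ℝ) < n := by exact_mod_cast hn
    have hp := aux_prod (c + 1) hs (n + 1)
    push_cast at hp
    have e1 : c + 1 + (n + 1 : ℝ) = (n + c + 1) + 1 := by ring
    have hpos : 0 < (n:ℝ) + c + 1 := by linarith
    rw [e1, Real.Gamma_add_one hpos.ne'] at hp
    have hq : (∏ j ∈ Finset.range (n + 1), (c + 1 + (j:ℝ))) =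
      (n + c + 1) * Real.Gamma (n + c + 1) / Real.Gamma (c + 1) := by
      rw [← hp]; field_simp
    rw [Real.GammaSeq, hq, Real.div_rpow hn'.le (by positivity),
      Real.rpow_add_one (x := (n:ℝ) + 1) (by positivity)]
    have := hG n
    have e2 : (n:ℝ) + (c + 1) = n + c + 1 := by ring
    rw [e2]
    have h7 : (0:ℝ) < (n:ℝ) ^ (c + 1) := by positivity
    have h8 : (0:ℝ) < ((n:ℝ) + 1) ^ c := by positivity
    have h9 : (0:ℝ) < n.factorial := by positivity
    field_simp
  obtain ⟨C, hC, h⟩ := aux_seq_bd _ (fun n => div_pos (hG n) (hD n)) hlim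
  refine ⟨C, hC, fun n => ⟨(div_le_iff₀ (hD n)).1 (h n).1, ?_⟩⟩
  have := (h n).2
  rwa [← mul_div_assoc, le_div_iff₀ (hD n), one_mul] at this

lemma aux_coef (μ : ℝ) (hμ : -1 < μ) : ∃ C > 0, ∀ n : ℕ,
    n.factorial * Real.Gamma (n + μ + 1) ≤
      C * (((n:ℝ) + 1) ^ (μ + 1/2) * (2 * n).factorial / 4 ^ n) ∧
    ((n:ℝ) + 1) ^ (μ + 1/2) * (2 * n).factorial / 4 ^ n ≤
      C * (n.factorial * Real.Gamma (n + μ + 1)) := by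
  obtain ⟨C, hC, h⟩ := aux_gamma_bd μ hμ
  obtain ⟨D, hD, h'⟩ := aux_gamma_bd (-1/2) (by norm_num)
  have hpi : 0 < √π := by positivity
  refine ⟨max (C * D * √π) (C * D / √π), by positivity, fun n => ?_⟩
  have hG : 0 < Real.Gamma (n + μ + 1) :=
    Real.Gamma_pos_of_pos (by have : (0:ℝ) ≤ n := n.cast_nonneg
                              linarith)
  obtain ⟨h1, h2⟩ := h n
  obtain ⟨h3, h4⟩ := h' n
  have hleg : Real.Gamma (n + -1/2 + 1) * n.factorial = (2*n).factorial / 4 ^ n * √π := by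
    have := Real.Gamma_mul_Gamma_add_half ((n:ℝ) + 1/2)
    have e : (n:ℝ) + 1/2 + 1/2 = n + 1 := by ring
    have e2 : 2 * ((n:ℝ) + 1/2) = (2 * n : ℕ) + 1 := by push_cast; ring
    rw [e, Real.Gamma_nat_eq_factorial, e2, Real.Gamma_nat_eq_factorial] at this
    have e3 : (n:ℝ) + -1/2 + 1 = n + 1/2 := by ring
    rw [e3, this]
    have e4 : (1:ℝ) - ((2 * n : ℕ) + 1) = -((2*n : ℕ) : ℝ) := by ring
    rw [e4, Real.rpow_neg (by norm_num), Real.rpow_natCast, pow_mul, show (2:ℝ)^2 = 4 by norm_num]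
    ring
  have hsp : ((n:ℝ) + 1) ^ (μ + 1/2) * ((n:ℝ) + 1) ^ (-1/2 : ℝ) = ((n:ℝ) + 1) ^ μ := by
    rw [← Real.rpow_add (by positivity)]; congr 1; ring
  set N : ℝ := ((n.factorial : ℕ) : ℝ) with hN
  have hNp : 0 < N := by positivity
  set u := ((n:ℝ) + 1) ^ (μ + 1/2) with hu
  have hup : 0 < u := by positivity
  set v := ((n:ℝ) + 1) ^ (-1/2 : ℝ) with hv
  have hvp : 0 < v := by positivity
  have hW : u * ((2*n).factorial : ℝ) / 4 ^ n = u * (Real.Gamma (n + -1/2 + 1) * N) / √π := by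
    rw [hleg]; field_simp
  rw [hW]
  rw [← hsp] at h1 h2
  set G := Real.Gamma (n + μ + 1)
  set H := Real.Gamma (n + -1/2 + 1)
  have hH : 0 < H := by
    by_contra hh
    have : 0 < v * N := by positivity
    nlinarith
  constructor
  · calc N * G ≤ N * (C * (u * v * N)) := by gcongr
      _ = C * (u * N) * (v * N) := by ring
      _ ≤ C * (u * N) * (D * H) := by gcongr
      _ = (C * D * √π) * (u * (H * N) / √π) := by field_simp
      _ ≤ _ := by gcongr; exact le_max_left _ _
  · calc u * (H * N) / √π ≤ u * (D * (v * N) * N) / √π := by gcongr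
      _ = D * N / √π * (u * v * N) := by ring
      _ ≤ D * N / √π * (C * G) := by gcongr
      _ = (C * D / √π) * (N * G) := by ring
      _ ≤ _ := by gcongr; exact le_max_right _ _

/-- first positive moment -/
lemma aux_mom_pos (K : ℕ) : ∃ C > 0, ∀ r > 0,
    Summable (fun n : ℕ => r ^ (2*n) / (2*n).factorial * (r / ((n:ℝ)+1)) ^ K) ∧
    ∑' n : ℕ, r ^ (2*n) / (2*n).factorial * (r / ((n:ℝ)+1)) ^ K ≤ C * Real.exp r := by
  refine ⟨((K:ℝ) + 2) ^ K, by positivity, fun r hr => ?_⟩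
  have hs := Real.summable_pow_div_factorial r
  have hinj : Function.Injective (fun n : ℕ => 2 * n + K) := fun a b h => by simpa using h
  have hs2 := (hs.comp_injective hinj).mul_left (((K:ℝ) + 2) ^ K)
  have hle : ∀ n : ℕ, r ^ (2*n) / (2*n).factorial * (r / ((n:ℝ)+1)) ^ K ≤
      ((K:ℝ) + 2) ^ K * ((fun m : ℕ => r ^ m / (m.factorial : ℝ)) ∘ (fun n : ℕ => 2 * n + K)) n := by
    intro n
    have h1 : ((2*n+K).factorial : ℝ) ≤ (2*n).factorial * (((K:ℝ)+2) * (n+1)) ^ K := by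
      have a1 := Nat.factorial_mul_ascFactorial (2*n) K
      have a2 := Nat.ascFactorial_le_pow_add (2*n) K
      have a3 : (2*n+K).factorial ≤ (2*n).factorial * ((K+2)*(n+1))^K := by
        rw [← a1]
        gcongr
        refine a2.trans (Nat.pow_le_pow_left ?_ K)
        nlinarith [Nat.zero_le (K*n)]
      exact_mod_cast a3
    simp only [Function.comp]
    rw [div_pow, div_mul_div_comm, ← pow_add, ← mul_div_assoc, div_le_div_iff₀ (by positivity) (by positivity)]
    rw [mul_pow] at h1
    calc r ^ (2*n+K) * ((2*n+K).factorial : ℝ) ≤ r ^ (2*n+K) * ((2*n).factorial * (((K:ℝ)+2)^K * ((n:ℝ)+1) ^ K)) := by gcongr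
      _ = _ := by ring
  have hs3 := Summable.of_nonneg_of_le (fun n => by positivity) hle hs2
  refine ⟨hs3, (hs3.tsum_le_tsum hle hs2).trans ?_⟩
  rw [tsum_mul_left]
  gcongr
  rw [Real.exp_eq_exp_ℝ, NormedSpace.exp_eq_tsum_div]
  exact tsum_comp_le_tsum_of_inj hs (fun a => by positivity) hinj

lemma aux_mom_neg : ∀ r ≥ (1/2 : ℝ),
    Summable (fun n : ℕ => r ^ (2*n) / (2*n).factorial * (r / ((n:ℝ)+1))⁻¹) ∧
    ∑' n : ℕ, r ^ (2*n) / (2*n).factorial * (r / ((n:ℝ)+1))⁻¹ ≤ 2 * Real.exp r := by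
  intro r hr
  have hr0 : 0 < r := by linarith
  have hs := Real.summable_pow_div_factorial r
  have hinj : Function.Injective (fun n : ℕ => 2 * n - 1) := fun a b h => by
    simp only at h; omega
  have hs2 := (hs.comp_injective hinj).mul_left 2
  have hle : ∀ n : ℕ, r ^ (2*n) / (2*n).factorial * (r / ((n:ℝ)+1))⁻¹ ≤
      2 * ((fun m : ℕ => r ^ m / (m.factorial : ℝ)) ∘ (fun n : ℕ => 2 * n - 1)) n := by
    intro n
    rcases n with _ | k
    · simp
      rw [inv_le_comm₀ hr0 (by norm_num)]; linarith
    · have e : 2 * (k+1) = (2*k+1) + 1 := by ring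
      simp only [Function.comp]
      rw [e, Nat.factorial_succ, Nat.add_sub_cancel]
      push_cast
      have : (0:ℝ) < (2*k+1).factorial := by positivity
      rw [pow_succ, inv_div]
      have h0 : r ^ (2*k+1) * r / ((2 * (k:ℝ)+1+1) * (2*k+1).factorial) * (((k:ℝ)+1+1)/r) =
        ((k:ℝ)+1+1) / (2 * (k:ℝ)+1+1) * (r ^ (2*k+1) / (2*k+1).factorial) := by field_simp
      rw [h0]
      gcongr
      rw [div_le_iff₀ (by positivity)]
      have : (0:ℝ) ≤ k := k.cast_nonneg
      linarith
  have hs3 := Summable.of_nonneg_of_le (fun n => by positivity) hle hs2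
  refine ⟨hs3, (hs3.tsum_le_tsum hle hs2).trans ?_⟩
  rw [tsum_mul_left]
  gcongr
  rw [Real.exp_eq_exp_ℝ, NormedSpace.exp_eq_tsum_div]
  exact tsum_comp_le_tsum_of_inj hs (fun a => by positivity) hinj

lemma aux_cosh (r : ℝ) : Summable (fun n : ℕ => r ^ (2*n) / ((2*n).factorial : ℝ)) ∧
    Real.exp r / 2 ≤ ∑' n : ℕ, r ^ (2*n) / ((2*n).factorial : ℝ) := by
  have h := Real.hasSum_cosh r
  refine ⟨h.summable, ?_⟩
  rw [h.tsum_eq, Real.cosh_eq]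
  have := Real.exp_pos (-r)
  linarith

lemma aux_main (b : ℝ) (hb : -1 ≤ b) : ∃ C > 0, ∀ r ≥ (1/2 : ℝ),
    Summable (fun n : ℕ => r ^ (2*n) / (2*n).factorial * (r / ((n:ℝ)+1)) ^ b) ∧
    ∑' n : ℕ, r ^ (2*n) / (2*n).factorial * (r / ((n:ℝ)+1)) ^ b ≤ C * Real.exp r ∧
    Real.exp r ≤ C * ∑' n : ℕ, r ^ (2*n) / (2*n).factorial * (r / ((n:ℝ)+1)) ^ b := by
  obtain ⟨K, hK⟩ := exists_nat_ge b
  obtain ⟨M, hM, hmom⟩ := aux_mom_pos K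
  obtain ⟨M1, hM1, hmom1⟩ := aux_mom_pos 1
  -- pointwise lower bound
  have hlow : ∀ ε > 0, ∃ A > 0, ∀ X > (0:ℝ), 1 ≤ A * X ^ b + ε * (X ^ 1 + X⁻¹) := by
    intro ε hε
    rcases le_total 0 b with h0 | h0
    · refine ⟨(ε ^ b)⁻¹, by positivity, fun X hX => ?_⟩
      rcases le_total ε X with h | h
      · have h1 : ε ^ b ≤ X ^ b := Real.rpow_le_rpow hε.le h h0
        have h2 : 1 ≤ (ε ^ b)⁻¹ * X ^ b := by
          rw [inv_mul_eq_div, le_div_iff₀ (by positivity)]; linarith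
        have : 0 ≤ ε * (X ^ 1 + X⁻¹) := by positivity
        linarith
      · have h2 : 1 ≤ ε * X⁻¹ := by
          rw [← div_eq_mul_inv, le_div_iff₀ hX]; linarith
        have : 0 ≤ (ε ^ b)⁻¹ * X ^ b := by positivity
        have : 0 ≤ ε * X ^ 1 := by positivity
        linarith
    · refine ⟨((ε⁻¹) ^ b)⁻¹, by positivity, fun X hX => ?_⟩
      rcases le_total X ε⁻¹ with h | h
      · have h1 : (ε⁻¹) ^ b ≤ X ^ b := Real.rpow_le_rpow_of_nonpos hX h h0
        have h2 : 1 ≤ ((ε⁻¹) ^ b)⁻¹ * X ^ b := by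
          rw [inv_mul_eq_div, le_div_iff₀ (by positivity)]; linarith
        have : 0 ≤ ε * (X ^ 1 + X⁻¹) := by positivity
        linarith
      · have h2 : 1 ≤ ε * X := by
          rwa [inv_le_iff_one_le_mul₀' hε] at h
        have : 0 ≤ ((ε⁻¹) ^ b)⁻¹ * X ^ b := by positivity
        have : 0 ≤ ε * X⁻¹ := by positivity
        rw [pow_one]
        linarith
  have hup : ∀ X > (0:ℝ), X ^ b ≤ X ^ K + X⁻¹ := by
    intro X hX
    rcases le_total 1 X with h | h
    · have h1 : X ^ b ≤ X ^ (K:ℝ) := Real.rpow_le_rpow_of_exponent_le h hK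
      rw [Real.rpow_natCast] at h1
      have : 0 ≤ X⁻¹ := by positivity
      linarith
    · have h1 : X ^ b ≤ X ^ (-1:ℝ) := Real.rpow_le_rpow_of_exponent_ge hX h hb
      rw [Real.rpow_neg_one] at h1
      have : 0 ≤ X ^ K := by positivity
      linarith
  obtain ⟨A, hA, hlow⟩ := hlow (1 / (4 * (M1 + 2))) (by positivity)
  refine ⟨max (M + 2) (4 * A), by positivity, fun r hr => ?_⟩
  have hr0 : 0 < r := by linarith
  obtain ⟨sK, bK⟩ := hmom r hr0
  obtain ⟨s1, b1⟩ := hmom1 r hr0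
  obtain ⟨sn, bn⟩ := aux_mom_neg r hr
  obtain ⟨sc, bc⟩ := aux_cosh r
  have hE := Real.exp_pos r
  have hle : ∀ n : ℕ, r ^ (2*n) / (2*n).factorial * (r / ((n:ℝ)+1)) ^ b ≤
     r ^ (2*n) / (2*n).factorial * (r / ((n:ℝ)+1)) ^ K +
     r ^ (2*n) / (2*n).factorial * (r / ((n:ℝ)+1))⁻¹ := by
    intro n
    rw [← mul_add]
    have := hup (r / ((n:ℝ)+1)) (by positivity)
    gcongr
  have sb := Summable.of_nonneg_of_le (fun n => by positivity) hle (sK.add sn)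
  refine ⟨sb, ?_, ?_⟩
  · calc _ ≤ _ := sb.tsum_le_tsum hle (sK.add sn)
      _ ≤ M * Real.exp r + 2 * Real.exp r := by rw [sK.tsum_add sn]; linarith
      _ = (M + 2) * Real.exp r := by ring
      _ ≤ _ := by gcongr; exact le_max_left _ _
  · have hle2 : ∀ n : ℕ, r ^ (2*n) / ((2*n).factorial : ℝ) ≤
      A * (r ^ (2*n) / (2*n).factorial * (r / ((n:ℝ)+1)) ^ b) +
      1 / (4 * (M1 + 2)) * (r ^ (2*n) / (2*n).factorial * (r / ((n:ℝ)+1)) ^ 1 +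
        r ^ (2*n) / (2*n).factorial * (r / ((n:ℝ)+1))⁻¹) := by
      intro n
      have h1 := hlow (r / ((n:ℝ)+1)) (by positivity)
      have h2 : 0 ≤ r ^ (2*n) / ((2*n).factorial : ℝ) := by positivity
      calc r ^ (2*n) / ((2*n).factorial : ℝ) = r ^ (2*n) / ((2*n).factorial : ℝ) * 1 := by ring
        _ ≤ _ := mul_le_mul_of_nonneg_left h1 h2
        _ = _ := by ring
    have h3 := sc.tsum_le_tsum hle2 ((sb.mul_left A).add ((s1.add sn).mul_left _))
    rw [(sb.mul_left A).tsum_add ((s1.add sn).mul_left _), tsum_mul_left, tsum_mul_left,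
      s1.tsum_add sn] at h3
    set S := ∑' n : ℕ, r ^ (2*n) / (2*n).factorial * (r / ((n:ℝ)+1)) ^ b
    have hS : 0 ≤ S := tsum_nonneg fun n => by positivity
    have h4 : 1 / (4 * (M1 + 2)) * (∑' n : ℕ, r ^ (2*n) / (2*n).factorial * (r / ((n:ℝ)+1)) ^ 1 +
        ∑' n : ℕ, r ^ (2*n) / (2*n).factorial * (r / ((n:ℝ)+1))⁻¹) ≤
        1 / (4 * (M1 + 2)) * ((M1 + 2) * Real.exp r) := by
      gcongr; linarith
    have h5 : 1 / (4 * (M1 + 2)) * ((M1 + 2) * Real.exp r) = Real.exp r / 4 := by field_simp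
    have h6 : Real.exp r ≤ 4 * A * S := by linarith
    exact h6.trans (by gcongr; exact le_max_right _ _)

/-- The reduced Bessel series. -/
noncomputable def auxF (μ r : ℝ) : ℝ :=
  ∑' n : ℕ, (r / 2) ^ (2 * n) / ((n.factorial : ℝ) * Real.Gamma ((n : ℝ) + μ + 1))

lemma besselI_eq (μ r : ℝ) (hr : 0 < r) : besselI μ r = (r / 2) ^ μ * auxF μ r := by
  rw [besselI, auxF, ← tsum_mul_left]
  congr 1; ext n
  have : (2 * (n:ℝ)) = ((2 * n : ℕ) : ℝ) := by push_cast; ring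
  rw [Real.rpow_add (by positivity), this, Real.rpow_natCast]
  ring

lemma auxF_large (μ : ℝ) (hμ : -1 < μ) : ∃ C > 0, ∀ r ≥ (1/2:ℝ),
    Summable (fun n : ℕ => (r / 2) ^ (2 * n) / ((n.factorial : ℝ) * Real.Gamma ((n : ℝ) + μ + 1))) ∧
    auxF μ r ≤ C * (r ^ (-(μ + 1/2)) * Real.exp r) ∧
    r ^ (-(μ + 1/2)) * Real.exp r ≤ C * auxF μ r := by
  obtain ⟨C, hC, hc⟩ := aux_coef μ hμ
  obtain ⟨D, hD, hm⟩ := aux_main (μ + 1/2) (by linarith)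
  refine ⟨C * D, by positivity, fun r hr => ?_⟩
  have hr0 : 0 < r := by linarith
  obtain ⟨s, h1, h2⟩ := hm r hr
  have hq : 0 < r ^ (-(μ + 1/2)) := by positivity
  have hG : ∀ n : ℕ, 0 < (n.factorial : ℝ) * Real.Gamma (n + μ + 1) := fun n =>
    mul_pos (by positivity) <| Real.Gamma_pos_of_pos (by have : (0:ℝ) ≤ n := n.cast_nonneg
                                                         linarith)
  have key : ∀ n : ℕ, r ^ (-(μ + 1/2)) * (r ^ (2*n) / (2*n).factorial * (r / ((n:ℝ)+1)) ^ (μ + 1/2))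
      = (r / 2) ^ (2 * n) / (((n:ℝ) + 1) ^ (μ + 1/2) * (2 * n).factorial / 4 ^ n) := by
    intro n
    rw [Real.rpow_neg hr0.le, Real.div_rpow hr0.le (by positivity), div_pow, pow_mul 2]
    have : (0:ℝ) < r ^ (μ + 1/2) := by positivity
    have : (0:ℝ) < ((n:ℝ) + 1) ^ (μ + 1/2) := by positivity
    norm_num
    field_simp
  have le1 : ∀ n : ℕ, (r / 2) ^ (2 * n) / ((n.factorial : ℝ) * Real.Gamma ((n : ℝ) + μ + 1)) ≤
      C * (r ^ (-(μ + 1/2)) * (r ^ (2*n) / (2*n).factorial * (r / ((n:ℝ)+1)) ^ (μ + 1/2))) := by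
    intro n
    rw [key, ← mul_div_assoc, div_le_div_iff₀ (hG n) (by positivity)]
    have := mul_le_mul_of_nonneg_left (hc n).2 (by positivity : 0 ≤ (r/2)^(2*n))
    linarith
  have le2 : ∀ n : ℕ, (r ^ (-(μ + 1/2)) * (r ^ (2*n) / (2*n).factorial * (r / ((n:ℝ)+1)) ^ (μ + 1/2))) ≤
      C * ((r / 2) ^ (2 * n) / ((n.factorial : ℝ) * Real.Gamma ((n : ℝ) + μ + 1))) := by
    intro n
    rw [key, ← mul_div_assoc, div_le_div_iff₀ (by positivity) (hG n)]
    have := mul_le_mul_of_nonneg_left (hc n).1 (by positivity : 0 ≤ (r/2)^(2*n))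
    linarith
  have s1 := (s.mul_left (r ^ (-(μ + 1/2))))
  have sF := Summable.of_nonneg_of_le (fun n => (div_pos (by positivity) (hG n)).le) le1 (s1.mul_left C)
  refine ⟨sF, ?_, ?_⟩
  · have := sF.tsum_le_tsum le1 (s1.mul_left C)
    rw [tsum_mul_left, tsum_mul_left] at this
    refine this.trans ?_
    calc _ ≤ C * (r ^ (-(μ + 1/2)) * (D * Real.exp r)) := by gcongr
      _ = _ := by ring
  · have := s1.tsum_le_tsum le2 (sF.mul_left C)
    rw [tsum_mul_left, tsum_mul_left] at this
    calc _ ≤ r ^ (-(μ + 1/2)) * (D * _) := mul_le_mul_of_nonneg_left h2 hq.le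
      _ = D * (r ^ (-(μ + 1/2)) * _) := by ring
      _ ≤ D * (C * auxF μ r) := mul_le_mul_of_nonneg_left this hD.le
      _ = _ := by ring

lemma auxF_small (μ : ℝ) (hμ : -1 < μ) : ∃ C > 0, ∀ r > 0, r ≤ (1/2:ℝ) →
    auxF μ r ≤ C ∧ 1 ≤ C * auxF μ r := by
  obtain ⟨_, _, h⟩ := auxF_large μ hμ
  obtain ⟨s, -⟩ := h (1/2) le_rfl
  have hG : ∀ n : ℕ, 0 < (n.factorial : ℝ) * Real.Gamma (n + μ + 1) := fun n =>
    mul_pos (by positivity) <| Real.Gamma_pos_of_pos (by have : (0:ℝ) ≤ n := n.cast_nonneg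
                                                         linarith)
  have hG0 : 0 < Real.Gamma (μ + 1) := Real.Gamma_pos_of_pos (by linarith)
  refine ⟨max (auxF μ (1/2)) (Real.Gamma (μ + 1)), lt_of_lt_of_le hG0 (le_max_right _ _),
    fun r hr hr2 => ?_⟩
  have hle : ∀ n : ℕ, (r / 2) ^ (2 * n) / ((n.factorial : ℝ) * Real.Gamma ((n : ℝ) + μ + 1)) ≤
    ((1/2 : ℝ) / 2) ^ (2 * n) / ((n.factorial : ℝ) * Real.Gamma ((n : ℝ) + μ + 1)) := by
    intro n
    have := hG n
    gcongr
  have sr := Summable.of_nonneg_of_le (fun n => (div_pos (by positivity) (hG n)).le) hle s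
  refine ⟨(sr.tsum_le_tsum hle s).trans (le_max_left _ _), ?_⟩
  have h0 := sr.le_tsum 0 (fun n _ => (div_pos (by positivity) (hG n)).le)
  simp only [mul_zero, pow_zero, Nat.factorial_zero, Nat.cast_one, one_mul, Nat.cast_zero, zero_add] at h0
  change _ ≤ auxF μ r at h0
  calc 1 = Real.Gamma (μ + 1) * (1 / Real.Gamma (μ + 1)) := by field_simp
    _ ≤ _ := mul_le_mul (le_max_right _ _) h0 (by positivity) (hG0.le.trans (le_max_right _ _))

lemma aux_ratio_small (μ cα t x y : ℝ) (hc : 0 < cα) (hx : 0 < x) (hy : 0 < y) (ht : 0 < t)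
    (h : x * y < t) :
    besselHeatKernel (2 * μ + 1) cα t x y / heatComparison (2 * μ + 1) t x y =
      cα * 4 ^ (-μ) * auxF μ (x * y / (2 * t)) := by
  have e1 : (2 * μ + 1 - 1) / 2 = μ := by ring
  have e2 : -(2 * μ + 1 - 1) / 2 = -μ := by ring
  have e3 : -(2 * μ + 1 + 1) / 2 = -μ + -1 := by ring
  have hp : 0 < x * y := mul_pos hx hy
  rw [besselHeatKernel, heatComparison, if_pos h, e1, e2, e3, besselI_eq _ _ (by positivity)]
  have e4 : x * y / (2 * t) / 2 = x * y / (4 * t) := by field_simp; norm_num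
  rw [e4]
  generalize auxF μ (x * y / (2 * t)) = F
  generalize x * y = p at *
  rw [Real.div_rpow hp.le (by positivity), Real.mul_rpow (by norm_num) ht.le,
    Real.rpow_neg hp.le, Real.rpow_add ht, Real.rpow_neg ht.le, Real.rpow_neg_one,
    Real.rpow_neg (by norm_num)]
  have : 0 < p ^ μ := by positivity
  have : 0 < t ^ μ := by positivity
  have : (0:ℝ) < 4 ^ μ := by positivity
  have := Real.exp_pos (-(x ^ 2 + y ^ 2) / (4 * t))
  field_simp

lemma aux_ratio_large (μ cα t x y : ℝ) (hc : 0 < cα) (hx : 0 < x) (hy : 0 < y) (ht : 0 < t)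
    (h : ¬ x * y < t) :
    besselHeatKernel (2 * μ + 1) cα t x y / heatComparison (2 * μ + 1) t x y =
      cα * 4 ^ (-μ) * 2 ^ (μ + 1/2) * (auxF μ (x * y / (2 * t)) /
        ((x * y / (2 * t)) ^ (-(μ + 1/2)) * Real.exp (x * y / (2 * t)))) := by
  have e1 : (2 * μ + 1 - 1) / 2 = μ := by ring
  have e2 : -(2 * μ + 1 - 1) / 2 = -μ := by ring
  have e3 : -(2 * μ + 1) / 2 = -(μ + 1/2) := by ring
  have hp : 0 < x * y := mul_pos hx hy
  have e5 : Real.exp (-|x - y| ^ 2 / (4 * t)) =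
      Real.exp (-(x ^ 2 + y ^ 2) / (4 * t)) * Real.exp (x * y / (2 * t)) := by
    rw [← Real.exp_add, sq_abs]; congr 1; field_simp; ring
  rw [besselHeatKernel, heatComparison, if_neg h, e1, e2, e3, besselI_eq _ _ (by positivity), e5]
  have e4 : x * y / (2 * t) / 2 = x * y / (4 * t) := by field_simp; norm_num
  rw [e4]
  generalize auxF μ (x * y / (2 * t)) = F
  have := Real.exp_pos (-(x ^ 2 + y ^ 2) / (4 * t))
  have := Real.exp_pos (x * y / (2 * t))
  generalize Real.exp (x * y / (2 * t)) = E at *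
  generalize x * y = p at *
  have e6 : t ^ (-(1:ℝ)/2) = t ^ μ * t⁻¹ ^ (μ + 1/2) := by
    rw [Real.inv_rpow ht.le, ← Real.rpow_neg ht.le, ← Real.rpow_add ht]; congr 1; ring
  have e7 : t ^ (μ + 1/2) * t ^ (-(1:ℝ)/2) = t ^ μ := by
    rw [← Real.rpow_add ht]; congr 1; ring
  rw [e6, Real.inv_rpow ht.le, Real.div_rpow hp.le (by positivity), Real.mul_rpow (by norm_num) ht.le,
    Real.rpow_neg hp.le, Real.rpow_neg hp.le, Real.rpow_neg (by positivity : 0 ≤ p / (2 * t)),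
    Real.div_rpow hp.le (by positivity), Real.mul_rpow (by norm_num) ht.le,
    Real.rpow_neg (by norm_num)]
  have : 0 < p ^ μ := by positivity
  have : 0 < p ^ (μ + 1/2) := by positivity
  have h1 : 0 < t ^ μ := by positivity
  have h2 : 0 < t ^ (μ + 1/2) := by positivity
  have h3 : t ^ (μ + 1/2) * t ^ (μ + 1/2) = t ^ μ * t ^ μ * t := by
    rw [← Real.rpow_add ht, ← Real.rpow_add ht, ← Real.rpow_add_one ht.ne']; congr 1; ring
  have : (0:ℝ) < 4 ^ μ := by positivity
  have : (0:ℝ) < 2 ^ (μ + 1/2) := by positivity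
  generalize t ^ (μ + 1/2) = U at *
  generalize t ^ μ = V at *
  generalize p ^ (μ + 1/2) = P at *
  generalize (2:ℝ) ^ (μ + 1/2) = Q at *
  field_simp
  linear_combination F * h3

theorem stmt7 (α : ℝ) (hα : -1/2 < α) (cα : ℝ) (hcα : 0 < cα) :
    ∃ C > 0, ∀ x > 0, ∀ y > 0, ∀ t > 0,
      C⁻¹ ≤ besselHeatKernel α cα t x y / heatComparison α t x y ∧
      besselHeatKernel α cα t x y / heatComparison α t x y ≤ C := by
  obtain ⟨μ, rfl⟩ : ∃ μ, α = 2 * μ + 1 := ⟨(α - 1) / 2, by ring⟩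
  have hμ : -1 < μ := by linarith
  obtain ⟨C1, hC1, h1⟩ := auxF_small μ hμ
  obtain ⟨C2, hC2, h2⟩ := auxF_large μ hμ
  have fin : ∀ k C : ℝ, 0 < k → 0 < C → ∃ D > 0, ∀ D' ≥ D, ∀ F, F ≤ C → 1 ≤ C * F →
      D'⁻¹ ≤ k * F ∧ k * F ≤ D' := by
    intro k C hk hC
    refine ⟨k * C + C / k, by positivity, fun D' hD F hF hF' => ⟨?_, ?_⟩⟩
    · have hCk : C / k ≤ D' := by
        have : 0 < k * C := by positivity
        linarith
      calc D'⁻¹ ≤ (C / k)⁻¹ := inv_anti₀ (by positivity) hCk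
        _ = k * (1 / C) := by field_simp
        _ ≤ k * F := by
          gcongr
          rw [div_le_iff₀ hC]; linarith
    · have : 0 < C / k := by positivity
      have : k * F ≤ k * C := by gcongr
      linarith
  obtain ⟨D1, hD1, f1⟩ := fin (cα * 4 ^ (-μ)) C1 (by positivity) hC1
  obtain ⟨D2, hD2, f2⟩ := fin (cα * 4 ^ (-μ) * 2 ^ (μ + 1/2)) C2 (by positivity) hC2
  refine ⟨max D1 D2, by positivity, fun x hx y hy t ht => ?_⟩
  have hp : 0 < x * y := mul_pos hx hy
  by_cases h : x * y < t
  · rw [aux_ratio_small μ cα t x y hcα hx hy ht h]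
    obtain ⟨a, b⟩ := h1 (x * y / (2 * t)) (by positivity)
      (by rw [div_le_iff₀ (by positivity)]; linarith)
    exact f1 _ (le_max_left _ _) _ a b
  · rw [aux_ratio_large μ cα t x y hcα hx hy ht h]
    obtain ⟨-, a, b⟩ := h2 (x * y / (2 * t))
      (by rw [ge_iff_le, le_div_iff₀ (by positivity)]; linarith)
    have hpos : 0 < (x * y / (2 * t)) ^ (-(μ + 1/2)) * Real.exp (x * y / (2 * t)) := by positivity
    refine f2 _ (le_max_right _ _) _ ?_ ?_
    · rwa [div_le_iff₀ hpos]
    · rwa [← mul_div_assoc, le_div_iff₀ hpos, one_mul]
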